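/- The Witten zeta function ζ_{so(5)}(s) = 6^s ∑_{m,n≥1} (m n (m+n)(m+2n))^{-s} has a simple pole at s = 1/2 with residue √3 · Γ(1/4)² / (8√π). -/

import Mathlib

open Filter Topology

/-! Fix `n` and compare the `n`-th row `∑ₘ (m n (m + n) (m + 2 n))⁻ˢ` with the integral over
`m > 0`. By homogeneity the integral equals `n ^ (1 - 4 s) I(s)`, where `I(s)` is the integral for
`n = 1`, and since the summand is monotone in `m` the error is at most the integral over
`0 < m < 1`, which is `O(n ^ (-3 Re s))`. Summing over `n`, the double series is `ζ(4 s - 1) I(s)`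
plus a function holomorphic on `1 / 3 < Re s < 1`, so its residue at `1 / 2` is `I(1 / 2) / 4`. The
substitution `x = (1 + t)⁻²` shows that `I(s)` is half of the beta value `B((3 s - 1) / 2, 1 - s)`.
Any other continuation agrees with this one on a punctured disc around `1 / 2`, which is connected.
-/

section General

open MeasureTheory Set

variable {E : Type*} [NormedAddCommGroup E]

lemma ofReal_pow_cpow {a : ℝ} (ha : 0 ≤ a) (n : ℕ) (z : ℂ) :
    ((a : ℂ) ^ n) ^ z = (a : ℂ) ^ (n * z) := by
  have harg : (n : ℝ) * (a : ℂ).arg = 0 := by rw [Complex.arg_ofReal_of_nonneg ha, mul_zero]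
  exact (Complex.cpow_nat_mul' (by simp [harg, Real.pi_pos])
    (by simp [harg, Real.pi_pos.le]) z).symm

lemma norm_ofReal_cpow_neg {a : ℝ} (ha : 0 < a) (s : ℂ) : ‖(a : ℂ) ^ (-s)‖ = a ^ (-s.re) := by
  rw [Complex.norm_cpow_eq_rpow_re_of_pos ha, Complex.neg_re]

lemma rpow_neg_le_of_pow_mul_pow_le {x y c σ : ℝ} (hx : 0 < x) (hy : 0 < y) (hσ : 0 ≤ σ) {a b : ℕ}
    (h : x ^ a * y ^ b ≤ c) : c ^ (-σ) ≤ x ^ (-(a * σ)) * y ^ (-(b * σ)) := by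
  calc c ^ (-σ) ≤ (x ^ a * y ^ b) ^ (-σ) :=
        Real.rpow_le_rpow_of_nonpos (by positivity) h (neg_nonpos.2 hσ)
    _ = x ^ (-(a * σ)) * y ^ (-(b * σ)) := by
        rw [Real.mul_rpow (by positivity) (by positivity), ← Real.rpow_natCast_mul hx.le,
          ← Real.rpow_natCast_mul hy.le, mul_neg, mul_neg]

lemma norm_cpow_neg_sub_cpow_neg_le {a b : ℝ} (ha : 0 < a) (hab : a ≤ b) {s : ℂ} (hs : 0 < s.re) :
    ‖(b : ℂ) ^ (-s) - (a : ℂ) ^ (-s)‖ ≤ ‖s‖ / s.re * (a ^ (-s.re) - b ^ (-s.re)) := by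
  have hs0 : s ≠ 0 := by rintro rfl; simp at hs
  have h0 : (0 : ℝ) ∉ uIcc a b := by
    rw [uIcc_of_le hab]
    exact fun h ↦ ha.not_ge h.1
  have hcpow : (b : ℂ) ^ (-s) - (a : ℂ) ^ (-s) = -s * ∫ x in a..b, (x : ℂ) ^ (-s - 1) := by
    rw [integral_cpow (Or.inr ⟨by simpa [sub_eq_iff_eq_add] using hs0, h0⟩), sub_add_cancel]
    field_simp
  have hrpow : a ^ (-s.re) - b ^ (-s.re) = s.re * ∫ x in a..b, x ^ (-s.re - 1) := by
    rw [integral_rpow (Or.inr ⟨by simpa [sub_eq_iff_eq_add] using hs.ne', h0⟩), sub_add_cancel]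
    field_simp
    ring
  have hint : ‖∫ x in a..b, (x : ℂ) ^ (-s - 1)‖ ≤ ∫ x in a..b, x ^ (-s.re - 1) := by
    refine intervalIntegral.norm_integral_le_of_norm_le hab (Eventually.of_forall fun t ht ↦ ?_)
      (intervalIntegral.intervalIntegrable_rpow (Or.inr h0))
    simp [Complex.norm_cpow_eq_rpow_re_of_pos (ha.trans ht.1)]
  calc ‖(b : ℂ) ^ (-s) - (a : ℂ) ^ (-s)‖ = ‖s‖ * ‖∫ x in a..b, (x : ℂ) ^ (-s - 1)‖ := by
        rw [hcpow, norm_mul, norm_neg]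
    _ ≤ ‖s‖ * ∫ x in a..b, x ^ (-s.re - 1) := by gcongr
    _ = ‖s‖ / s.re * (a ^ (-s.re) - b ^ (-s.re)) := by rw [hrpow]; field_simp

lemma norm_smul_sub_integral_le [NormedSpace ℝ E] [CompleteSpace E] {f : ℝ → E} {g : ℝ → ℝ}
    {a b : ℝ} (hab : a ≤ b) (hfg : ∀ x ∈ Ioc a b, ‖f b - f x‖ ≤ g x - g b)
    (hf : IntervalIntegrable f volume a b) (hg : IntervalIntegrable g volume a b) :
    ‖(b - a) • f b - ∫ x in a..b, f x‖ ≤ (∫ x in a..b, g x) - (b - a) * g b := by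
  rw [← smul_eq_mul, ← intervalIntegral.integral_const, ← intervalIntegral.integral_const,
    ← intervalIntegral.integral_sub intervalIntegrable_const hf,
    ← intervalIntegral.integral_sub hg intervalIntegrable_const]
  exact intervalIntegral.norm_integral_le_of_norm_le hab (Eventually.of_forall hfg)
    (hg.sub intervalIntegrable_const)

section SumIntegral

variable [NormedSpace ℝ E] [CompleteSpace E] {f : ℝ → E} {g : ℝ → ℝ}

/- On each cell `(k, k + 1]` the error is at most the integral of `g` minus `g (k + 1)`. As `g` is
antitone, these bounds telescope and only the first cell survives. -/
lemma norm_sum_range_sub_integral_le (hg0 : ∀ x, 0 < x → 0 ≤ g x)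
    (hfg : ∀ x y, 0 < x → x ≤ y → ‖f y - f x‖ ≤ g x - g y)
    (hf : IntegrableOn f (Ioi 0)) (hg : IntervalIntegrable g volume 0 1) (N : ℕ) :
    ‖∑ k ∈ Finset.range (N + 1), f (k + 1) - ∫ x in (0 : ℝ)..(N + 1 : ℕ), f x‖ ≤
      ∫ x in (0 : ℝ)..1, g x := by
  have hanti : AntitoneOn g (Ioi 0) := fun x hx y _ hxy ↦
    sub_nonneg.1 ((norm_nonneg _).trans (hfg x y hx hxy))
  have hfi (k : ℕ) : IntervalIntegrable f volume k (k + 1 : ℕ) := by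
    rw [intervalIntegrable_iff_integrableOn_Ioc_of_le (by simp)]
    exact hf.mono_set fun x hx ↦ (Nat.cast_nonneg k).trans_lt hx.1
  have hgi (k : ℕ) : IntervalIntegrable g volume k (k + 1 : ℕ) := by
    rcases k.eq_zero_or_pos with rfl | hk
    · simpa using hg
    · refine (hanti.mono fun x hx ↦ ?_).intervalIntegrable
      rw [uIcc_of_le (by simp)] at hx
      exact (Nat.cast_pos.2 hk).trans_le hx.1
  have hcell (k : ℕ) : ‖f (k + 1) - ∫ x in (k : ℝ)..(k + 1 : ℕ), f x‖ ≤
      (∫ x in (k : ℝ)..(k + 1 : ℕ), g x) - g (k + 1) := by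
    simpa using norm_smul_sub_integral_le (by simp : (k : ℝ) ≤ (k + 1 : ℕ))
      (fun x hx ↦ hfg x _ ((Nat.cast_nonneg k).trans_lt hx.1) hx.2) (hfi k) (hgi k)
  have htail : ∫ x in (1 : ℝ)..(N + 1 : ℕ), g x ≤ ∑ k ∈ Finset.range N, g (k + 1) := by
    have hanti' : AntitoneOn g (Icc 1 (1 + N)) := hanti.mono fun x hx ↦ one_pos.trans_le hx.1
    simpa [add_comm] using hanti'.integral_le_sum
  have hgtail : IntervalIntegrable g volume 1 (N + 1 : ℕ) :=
    (hanti.mono fun x hx ↦ one_pos.trans_le (by simpa using hx.1)).intervalIntegrable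
  calc ‖∑ k ∈ Finset.range (N + 1), f (k + 1) - ∫ x in (0 : ℝ)..(N + 1 : ℕ), f x‖
      = ‖∑ k ∈ Finset.range (N + 1), (f (k + 1) - ∫ x in (k : ℝ)..(k + 1 : ℕ), f x)‖ := by
        rw [Finset.sum_sub_distrib,
          intervalIntegral.sum_integral_adjacent_intervals fun k _ ↦ hfi k, Nat.cast_zero]
    _ ≤ ∑ k ∈ Finset.range (N + 1), ((∫ x in (k : ℝ)..(k + 1 : ℕ), g x) - g (k + 1)) :=
        norm_sum_le_of_le _ fun k _ ↦ hcell k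
    _ = (∫ x in (0 : ℝ)..1, g x) + (∫ x in (1 : ℝ)..(N + 1 : ℕ), g x) -
          (∑ k ∈ Finset.range N, g (k + 1) + g (N + 1)) := by
        rw [Finset.sum_sub_distrib,
          intervalIntegral.sum_integral_adjacent_intervals fun k _ ↦ hgi k, Nat.cast_zero,
          intervalIntegral.integral_add_adjacent_intervals hg hgtail, Finset.sum_range_succ]
    _ ≤ ∫ x in (0 : ℝ)..1, g x := by linarith [hg0 (N + 1) (by positivity)]

theorem norm_tsum_sub_integral_Ioi_le (hg0 : ∀ x, 0 < x → 0 ≤ g x)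
    (hfg : ∀ x y, 0 < x → x ≤ y → ‖f y - f x‖ ≤ g x - g y)
    (hf : IntegrableOn f (Ioi 0)) (hg : IntervalIntegrable g volume 0 1)
    (hsum : Summable fun k : ℕ ↦ f (k + 1)) :
    ‖∑' k : ℕ, f (k + 1) - ∫ x in Ioi 0, f x‖ ≤ ∫ x in (0 : ℝ)..1, g x := by
  have hsum_tendsto := hsum.hasSum.tendsto_sum_nat.comp (tendsto_add_atTop_nat 1)
  have hint_tendsto := intervalIntegral_tendsto_integral_Ioi 0 hf
    ((tendsto_natCast_atTop_atTop (R := ℝ)).comp (tendsto_add_atTop_nat 1))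
  exact le_of_tendsto (hsum_tendsto.sub hint_tendsto).norm
    (Eventually.of_forall (norm_sum_range_sub_integral_le hg0 hfg hf hg))

end SumIntegral

lemma summable_nat_add_one_rpow_neg {σ : ℝ} (hσ : 1 < σ) :
    Summable fun n : ℕ ↦ ((n : ℝ) + 1) ^ (-σ) := by
  simpa using (summable_nat_add_iff 1).2 (Real.summable_nat_rpow.2 (neg_lt_neg hσ))

theorem differentiableOn_tsum_of_norm_le_rpow [NormedSpace ℂ E] [CompleteSpace E]
    {F : ℕ → ℂ → E} {U : Set ℂ} {B σ : ℂ → ℝ} (hU : IsOpen U) (hB : ContinuousOn B U)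
    (hσ : ContinuousOn σ U) (hσ1 : ∀ s ∈ U, 1 < σ s) (hF : ∀ n, DifferentiableOn ℂ (F n) U)
    (hbound : ∀ (n : ℕ), ∀ s ∈ U, ‖F n s‖ ≤ B s * ((n : ℝ) + 1) ^ (-σ s)) :
    DifferentiableOn ℂ (fun s ↦ ∑' n, F n s) U := by
  intro s hs
  obtain ⟨τ, hτ1, hτ⟩ := exists_between (hσ1 s hs)
  have hB0 : 0 ≤ B s := by simpa using (norm_nonneg _).trans (hbound 0 s hs)
  have hUs : U ∈ 𝓝 s := hU.mem_nhds hs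
  have hloc : ∀ᶠ z in 𝓝 s, z ∈ U ∧ B z < B s + 1 ∧ τ < σ z := by
    filter_upwards [hUs, (hB.continuousAt hUs).eventually_lt_const (lt_add_one _),
      (hσ.continuousAt hUs).eventually_const_lt hτ] with z h₁ h₂ h₃ using ⟨h₁, h₂, h₃⟩
  obtain ⟨V, hV, hVo, hsV⟩ := eventually_nhds_iff.1 hloc
  refine (DifferentiableOn.differentiableAt ?_ (hVo.mem_nhds hsV)).differentiableWithinAt
  refine Complex.differentiableOn_tsum_of_summable_norm
    ((summable_nat_add_one_rpow_neg hτ1).mul_left (B s + 1))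
    (fun n ↦ (hF n).mono fun z hz ↦ (hV z hz).1) hVo fun n z hz ↦ ?_
  obtain ⟨hzU, hzB, hzσ⟩ := hV z hz
  refine (hbound n z hzU).trans ?_
  gcongr
  simp

theorem isPreconnected_ball_diff_singleton (c : ℂ) (r : ℝ) :
    IsPreconnected (Metric.ball c r \ {c}) := by
  rcases le_or_gt r 0 with hr | hr
  · simp [Metric.ball_eq_empty.2 hr, isPreconnected_empty]
  have himage : (fun w ↦ c + Complex.exp w) '' {w | w.re < Real.log r} = Metric.ball c r \ {c} := by
    ext z
    constructor
    · rintro ⟨w, hw, rfl⟩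
      have : Real.exp w.re < r := (Real.lt_log_iff_exp_lt hr).1 hw
      simpa [Complex.norm_exp, Complex.exp_ne_zero] using this
    · rintro ⟨hz, hzc⟩
      have hne : z - c ≠ 0 := sub_ne_zero.2 hzc
      refine ⟨Complex.log (z - c), ?_, by simp [Complex.exp_log hne]⟩
      simpa [Complex.log_re] using
        Real.log_lt_log (norm_pos_iff.2 hne) (mem_ball_iff_norm.1 hz)
  rw [← himage]
  exact (convex_halfSpace_re_lt _).isPreconnected.image _ (by fun_prop)

theorem eventuallyEq_nhdsNE_of_eventuallyEq_nhdsWithin [NormedSpace ℂ E] [CompleteSpace E]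
    {f g : ℂ → E} {c : ℂ} {U S : Set ℂ}
    (hU : U ∈ 𝓝 c) (hf : DifferentiableOn ℂ f (U \ {c})) (hg : DifferentiableOn ℂ g (U \ {c}))
    (hS : IsOpen S) (hcS : c ∈ closure S) (hc : c ∉ S) (hfg : f =ᶠ[𝓝[S] c] g) :
    f =ᶠ[𝓝[≠] c] g := by
  obtain ⟨r, hr, hrU⟩ := Metric.mem_nhds_iff.1 hU
  have hopen : IsOpen (Metric.ball c r \ {c}) := Metric.isOpen_ball.sdiff isClosed_singleton
  have hsub : Metric.ball c r \ {c} ⊆ U \ {c} := sdiff_subset_sdiff_left hrU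
  have : (𝓝[S] c).NeBot := mem_closure_iff_nhdsWithin_neBot.1 hcS
  have hball : ∀ᶠ z in 𝓝[S] c, z ∈ Metric.ball c r :=
    mem_nhdsWithin_of_mem_nhds (Metric.ball_mem_nhds c hr)
  obtain ⟨z, ⟨hz, hzr⟩, hzS⟩ := (((eventually_eventually_nhdsWithin.2 hfg).and hball).and
    eventually_mem_nhdsWithin).exists
  rw [hS.nhdsWithin_eq hzS] at hz
  have heq : EqOn f g (Metric.ball c r \ {c}) :=
    ((hf.mono hsub).analyticOnNhd hopen).eqOn_of_preconnected_of_eventuallyEq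
      ((hg.mono hsub).analyticOnNhd hopen) (isPreconnected_ball_diff_singleton c r)
      ⟨hzr, ne_of_mem_of_not_mem hzS hc⟩ hz
  exact heq.eventuallyEq_of_mem (sdiff_mem_nhdsWithin_compl (Metric.ball_mem_nhds c hr) _)

end General

section Beta

open MeasureTheory Set

lemma image_inv_one_add_sq_Ioi : (fun t : ℝ ↦ ((1 + t) ^ 2)⁻¹) '' Ioi 0 = Ioo 0 1 := by
  ext v
  constructor
  · rintro ⟨t, ht : 0 < t, rfl⟩
    exact ⟨by positivity, inv_lt_one_of_one_lt₀ (by nlinarith)⟩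
  · rintro ⟨hv0, hv1⟩
    refine ⟨(√v)⁻¹ - 1, ?_, by simp [Real.sq_sqrt hv0.le]⟩
    have hlt : √v < 1 := by rwa [Real.sqrt_lt' one_pos, one_pow]
    exact sub_pos.2 ((one_lt_inv₀ (Real.sqrt_pos.2 hv0)).2 hlt)

lemma injOn_inv_one_add_sq_Ioi : InjOn (fun t : ℝ ↦ ((1 + t) ^ 2)⁻¹) (Ioi 0) := by
  intro a (ha : 0 < a) b (hb : 0 < b) hab
  have := (pow_left_inj₀ (by positivity) (by positivity) two_ne_zero).1 (inv_injective hab)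
  linarith

lemma hasDerivAt_inv_one_add_sq {t : ℝ} (ht : 1 + t ≠ 0) :
    HasDerivAt (fun t : ℝ ↦ ((1 + t) ^ 2)⁻¹) (-2 * ((1 + t) ^ 3)⁻¹) t := by
  refine ((((hasDerivAt_id t).const_add 1).fun_pow 2).fun_inv (pow_ne_zero 2 ht)).congr_deriv ?_
  simp only [id]
  field_simp
  norm_num
  ring

lemma abs_deriv_smul_betaIntegrand (u v : ℂ) {t : ℝ} (ht : 0 < t) :
    |-2 * ((1 + t) ^ 3)⁻¹| • (((((1 + t) ^ 2)⁻¹ : ℝ) : ℂ) ^ (u - 1) *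
      (1 - ((((1 + t) ^ 2)⁻¹ : ℝ) : ℂ)) ^ (v - 1)) =
    2 * (((1 + t : ℝ) : ℂ) ^ (1 - 2 * u - 2 * v) * ((t * (t + 2) : ℝ) : ℂ) ^ (v - 1)) := by
  have h1t : 0 < 1 + t := by linarith
  have hne : ((1 + t : ℝ) : ℂ) ≠ 0 := by exact_mod_cast h1t.ne'
  have hjac : |-2 * ((1 + t) ^ 3)⁻¹| = 2 * ((1 + t) ^ 3)⁻¹ := by
    rw [abs_mul, abs_of_pos (by positivity : 0 < ((1 + t) ^ 3)⁻¹)]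
    norm_num
  have hsq (z : ℂ) : ((((1 + t) ^ 2)⁻¹ : ℝ) : ℂ) ^ z = ((1 + t : ℝ) : ℂ) ^ (-(2 * z)) := by
    rw [Complex.ofReal_inv, Complex.inv_cpow_ofReal_nonneg (by positivity), Complex.ofReal_pow,
      ofReal_pow_cpow h1t.le, Complex.cpow_neg, Nat.cast_ofNat]
  have hcompl : (1 - ((((1 + t) ^ 2)⁻¹ : ℝ) : ℂ)) =
      ((t * (t + 2) : ℝ) : ℂ) * ((((1 + t) ^ 2)⁻¹ : ℝ) : ℂ) := by
    norm_cast
    field_simp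
    ring
  have hcube : ((((1 + t) ^ 3)⁻¹ : ℝ) : ℂ) = ((1 + t : ℝ) : ℂ) ^ (-3 : ℂ) := by
    rw [Complex.cpow_neg, Complex.cpow_ofNat, Complex.ofReal_inv, Complex.ofReal_pow]
  have hexp : ((1 + t : ℝ) : ℂ) ^ (1 - 2 * u - 2 * v) = ((1 + t : ℝ) : ℂ) ^ (-3 : ℂ) *
      ((1 + t : ℝ) : ℂ) ^ (-(2 * (u - 1))) * ((1 + t : ℝ) : ℂ) ^ (-(2 * (v - 1))) := by
    rw [← Complex.cpow_add _ _ hne, ← Complex.cpow_add _ _ hne]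
    ring_nf
  rw [hjac, hcompl, Complex.mul_cpow_ofReal_nonneg (by positivity) (by positivity), hsq, hsq,
    Complex.real_smul, Complex.ofReal_mul, hcube, hexp, Complex.ofReal_ofNat]
  ring

lemma integrableOn_Ioi_one_add_cpow_mul_cpow {u v : ℂ} (hu : 0 < u.re) (hv : 0 < v.re) :
    IntegrableOn (fun t : ℝ ↦ ((1 + t : ℝ) : ℂ) ^ (1 - 2 * u - 2 * v) *
      ((t * (t + 2) : ℝ) : ℂ) ^ (v - 1)) (Ioi 0) := by
  have hbeta := Complex.betaIntegral_convergent hu hv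
  rw [intervalIntegrable_iff_integrableOn_Ioo_of_le zero_le_one, ← image_inv_one_add_sq_Ioi,
    integrableOn_image_iff_integrableOn_abs_deriv_smul measurableSet_Ioi
      (fun t ht ↦ (hasDerivAt_inv_one_add_sq (add_pos one_pos ht).ne').hasDerivWithinAt)
      injOn_inv_one_add_sq_Ioi] at hbeta
  simpa [IntegrableOn] using (hbeta.congr_fun (fun t ht ↦ abs_deriv_smul_betaIntegrand u v ht)
    measurableSet_Ioi).const_mul (1 / 2)

theorem integral_Ioi_one_add_cpow_mul_cpow (u v : ℂ) :
    ∫ t in Ioi (0 : ℝ), ((1 + t : ℝ) : ℂ) ^ (1 - 2 * u - 2 * v) *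
      ((t * (t + 2) : ℝ) : ℂ) ^ (v - 1) = Complex.betaIntegral u v / 2 := by
  rw [Complex.betaIntegral, intervalIntegral.integral_of_le zero_le_one,
    integral_Ioc_eq_integral_Ioo, ← image_inv_one_add_sq_Ioi,
    integral_image_eq_integral_abs_deriv_smul measurableSet_Ioi
      (fun t ht ↦ (hasDerivAt_inv_one_add_sq (add_pos one_pos ht).ne').hasDerivWithinAt)
      injOn_inv_one_add_sq_Ioi,
    setIntegral_congr_fun measurableSet_Ioi fun t ht ↦ abs_deriv_smul_betaIntegrand u v ht,
    integral_const_mul, mul_div_cancel_left₀ _ two_ne_zero]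

lemma differentiableAt_Gamma_of_re_pos {s : ℂ} (hs : 0 < s.re) :
    DifferentiableAt ℂ Complex.Gamma s := by
  refine Complex.differentiableAt_Gamma s fun m hm ↦ ?_
  rw [hm, Complex.neg_re, Complex.natCast_re] at hs
  linarith [m.cast_nonneg (α := ℝ)]

theorem differentiableOn_betaIntegral {u v : ℂ → ℂ} {U : Set ℂ} (hu : DifferentiableOn ℂ u U)
    (hv : DifferentiableOn ℂ v U) (hu0 : ∀ s ∈ U, 0 < (u s).re)
    (hv0 : ∀ s ∈ U, 0 < (v s).re) :
    DifferentiableOn ℂ (fun s ↦ Complex.betaIntegral (u s) (v s)) U := by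
  have hGamma {w : ℂ → ℂ} (hw : DifferentiableOn ℂ w U) (hw0 : ∀ s ∈ U, 0 < (w s).re) :
      DifferentiableOn ℂ (fun s ↦ Complex.Gamma (w s)) U := fun s hs ↦
    (differentiableAt_Gamma_of_re_pos (hw0 s hs)).comp_differentiableWithinAt s (hw s hs)
  have hadd0 : ∀ s ∈ U, 0 < (u s + v s).re := fun s hs ↦ add_pos (hu0 s hs) (hv0 s hs)
  exact (((hGamma hu hu0).mul (hGamma hv hv0)).div (hGamma (hu.add hv) hadd0)
    fun s hs ↦ Complex.Gamma_ne_zero_of_re_pos (hadd0 s hs)).congr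
    fun s hs ↦ Complex.betaIntegral_eq_Gamma_mul_div _ _ (hu0 s hs) (hv0 s hs)

theorem betaIntegral_one_fourth_one_half :
    Complex.betaIntegral (1 / 4) (1 / 2) =
      ((Real.Gamma (1 / 4) ^ 2 / √(2 * Real.pi) : ℝ) : ℂ) := by
  have hrefl : Real.Gamma (1 / 4) * Real.Gamma (3 / 4) = √2 * Real.pi := by
    have := Real.Gamma_mul_Gamma_one_sub (1 / 4)
    rw [show (1 : ℝ) - 1 / 4 = 3 / 4 by norm_num, mul_one_div, Real.sin_pi_div_four] at this
    rw [this]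
    field_simp
    norm_num
  have hpos : 0 < Real.Gamma (3 / 4) := Real.Gamma_pos_of_pos (by norm_num)
  have hreal : Real.Gamma (1 / 4) * Real.Gamma (1 / 2) / Real.Gamma (3 / 4) =
      Real.Gamma (1 / 4) ^ 2 / √(2 * Real.pi) := by
    rw [Real.Gamma_one_half_eq, Real.sqrt_mul zero_le_two,
      div_eq_div_iff hpos.ne' (by positivity), sq, mul_assoc _ (Real.Gamma _), hrefl]
    linear_combination Real.Gamma (1 / 4) * √2 * Real.mul_self_sqrt Real.pi_pos.le
  rw [Complex.betaIntegral_eq_Gamma_mul_div _ _ (by norm_num) (by norm_num), ← hreal]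
  push_cast [← Complex.Gamma_ofReal]
  norm_num

end Beta

section SO5

open MeasureTheory Set

/-- The quartic form `m n (m + n) (m + 2 n)`: six times the dimension of the irreducible
representation of `so(5)` whose shifted highest weight has coordinates `(m, n)`. -/
def so5Form (m n : ℝ) : ℝ := m * n * (m + n) * (m + 2 * n)

lemma so5Form_pos {x y : ℝ} (hx : 0 < x) (hy : 0 < y) : 0 < so5Form x y := by
  unfold so5Form
  positivity

lemma so5Form_le_so5Form_left {x₁ x₂ y : ℝ} (hx₁ : 0 < x₁) (hx : x₁ ≤ x₂) (hy : 0 < y) :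
    so5Form x₁ y ≤ so5Form x₂ y := by
  have hx₂ : 0 < x₂ := hx₁.trans_le hx
  unfold so5Form
  gcongr

lemma so5Form_mul_left_self (x y : ℝ) : so5Form (y * x) y = y ^ 4 * so5Form x 1 := by
  unfold so5Form
  ring

lemma so5Form_rpow_neg_le {x y σ : ℝ} (hx : 0 < x) (hy : 0 < y) (hσ : 0 ≤ σ) {a b : ℕ}
    (ha : 1 ≤ a) (hb : 1 ≤ b) (hab : a + b = 4) :
    so5Form x y ^ (-σ) ≤ x ^ (-(a * σ)) * y ^ (-(b * σ)) := by
  refine rpow_neg_le_of_pow_mul_pow_le hx hy hσ ?_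
  have hexpand : so5Form x y = x ^ 3 * y + 3 * (x ^ 2 * y ^ 2) + 2 * (x * y ^ 3) := by
    unfold so5Form
    ring
  have h31 : 0 < x ^ 3 * y := by positivity
  have h22 : 0 < x ^ 2 * y ^ 2 := by positivity
  have h13 : 0 < x * y ^ 3 := by positivity
  obtain ⟨rfl, rfl⟩ | ⟨rfl, rfl⟩ | ⟨rfl, rfl⟩ :
      (a = 1 ∧ b = 3) ∨ (a = 2 ∧ b = 2) ∨ (a = 3 ∧ b = 1) := by omega
  all_goals linarith

lemma norm_so5Form_cpow_neg_le {x y : ℝ} (hx : 0 < x) (hy : 0 < y) {s : ℂ} (hs : 0 ≤ s.re)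
    {a b : ℕ} (ha : 1 ≤ a) (hb : 1 ≤ b) (hab : a + b = 4) :
    ‖(so5Form x y : ℂ) ^ (-s)‖ ≤ x ^ (-(a * s.re)) * y ^ (-(b * s.re)) := by
  rw [norm_ofReal_cpow_neg (so5Form_pos hx hy)]
  exact so5Form_rpow_neg_le hx hy hs ha hb hab

/-- The integral of `so5Form x 1 ^ (-s)` over `x > 0`. By homogeneity it is the coefficient of
`n ^ (1 - 4 s)` in the integral that approximates the `n`-th row of the double series. -/
noncomputable def so5AngularIntegral (s : ℂ) : ℂ :=
  ∫ x in Ioi (0 : ℝ), (so5Form x 1 : ℂ) ^ (-s)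

lemma so5Form_one_cpow_neg {x : ℝ} (hx : 0 < x) (s : ℂ) :
    (so5Form x 1 : ℂ) ^ (-s) =
      ((1 + x : ℝ) : ℂ) ^ (1 - 2 * ((3 * s - 1) / 2) - 2 * (1 - s)) *
        ((x * (x + 2) : ℝ) : ℂ) ^ ((1 - s) - 1) := by
  have hfactor : so5Form x 1 = (1 + x) * (x * (x + 2)) := by
    unfold so5Form
    ring
  rw [hfactor, Complex.ofReal_mul, Complex.mul_cpow_ofReal_nonneg (by positivity) (by positivity)]
  ring_nf

lemma re_three_mul_sub_one_div_two_pos {s : ℂ} (hs : 1 / 3 < s.re) :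
    0 < ((3 * s - 1) / 2).re := by
  simp
  linarith

lemma re_one_sub_pos {s : ℂ} (hs : s.re < 1) : 0 < (1 - s).re := by
  simpa using hs

theorem so5AngularIntegral_eq_betaIntegral (s : ℂ) :
    so5AngularIntegral s = Complex.betaIntegral ((3 * s - 1) / 2) (1 - s) / 2 := by
  rw [so5AngularIntegral, ← integral_Ioi_one_add_cpow_mul_cpow]
  exact setIntegral_congr_fun measurableSet_Ioi fun x hx ↦ so5Form_one_cpow_neg hx s

lemma differentiableOn_so5AngularIntegral :
    DifferentiableOn ℂ so5AngularIntegral (Complex.re ⁻¹' Ioo (1 / 3) 1) := by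
  have hbeta := (differentiableOn_betaIntegral (U := Complex.re ⁻¹' Ioo (1 / 3) 1)
    (u := fun s ↦ (3 * s - 1) / 2) (v := fun s ↦ 1 - s) (by fun_prop) (by fun_prop)
    (fun s hs ↦ re_three_mul_sub_one_div_two_pos hs.1)
    (fun s hs ↦ re_one_sub_pos hs.2)).div_const 2
  exact hbeta.congr fun s _ ↦ so5AngularIntegral_eq_betaIntegral s

lemma so5AngularIntegral_one_half :
    so5AngularIntegral (1 / 2) = ((Real.Gamma (1 / 4) ^ 2 / (2 * √(2 * Real.pi)) : ℝ) : ℂ) := by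
  rw [so5AngularIntegral_eq_betaIntegral, show (3 * (1 / 2) - 1) / 2 = (1 / 4 : ℂ) by norm_num,
    show 1 - 1 / 2 = (1 / 2 : ℂ) by norm_num, betaIntegral_one_fourth_one_half]
  push_cast
  ring

lemma so5Form_mul_left_self_cpow_neg {x y : ℝ} (hx : 0 < x) (hy : 0 < y) (s : ℂ) :
    (so5Form (y * x) y : ℂ) ^ (-s) = (y : ℂ) ^ (-(4 * s)) * (so5Form x 1 : ℂ) ^ (-s) := by
  rw [so5Form_mul_left_self, Complex.ofReal_mul, Complex.mul_cpow_ofReal_nonneg (by positivity)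
    (so5Form_pos hx one_pos).le, Complex.ofReal_pow, ofReal_pow_cpow hy.le]
  push_cast
  ring_nf

lemma integrableOn_so5Form_cpow_neg {y : ℝ} (hy : 0 < y) {s : ℂ}
    (hs : s ∈ Complex.re ⁻¹' Ioo (1 / 3) 1) :
    IntegrableOn (fun x ↦ (so5Form x y : ℂ) ^ (-s)) (Ioi 0) := by
  have hone : IntegrableOn (fun x ↦ (so5Form x 1 : ℂ) ^ (-s)) (Ioi 0) :=
    (integrableOn_Ioi_one_add_cpow_mul_cpow (re_three_mul_sub_one_div_two_pos hs.1)
      (re_one_sub_pos hs.2)).congr_fun (fun x hx ↦ (so5Form_one_cpow_neg hx s).symm)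
      measurableSet_Ioi
  rw [← mul_zero y, ← integrableOn_Ioi_comp_mul_left_iff _ 0 hy]
  exact IntegrableOn.congr_fun (hone.const_mul ((y : ℂ) ^ (-(4 * s))))
    (fun x hx ↦ (so5Form_mul_left_self_cpow_neg hx hy s).symm) measurableSet_Ioi

lemma integral_so5Form_cpow_neg {y : ℝ} (hy : 0 < y) (s : ℂ) :
    ∫ x in Ioi (0 : ℝ), (so5Form x y : ℂ) ^ (-s) =
      (y : ℂ) ^ (1 - 4 * s) * so5AngularIntegral s := by
  have hy0 : (y : ℂ) ≠ 0 := by exact_mod_cast hy.ne'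
  have hscale := integral_comp_mul_left_Ioi (fun x ↦ (so5Form x y : ℂ) ^ (-s)) 0 hy
  rw [mul_zero, setIntegral_congr_fun measurableSet_Ioi
    fun x hx ↦ so5Form_mul_left_self_cpow_neg hx hy s, integral_const_mul, Complex.real_smul,
    Complex.ofReal_inv, eq_inv_mul_iff_mul_eq₀ hy0] at hscale
  rw [← hscale, so5AngularIntegral, sub_eq_add_neg, Complex.cpow_add _ _ hy0, Complex.cpow_one,
    mul_assoc]

/-- The sum of `so5Form m y ^ (-s)` over the integers `m ≥ 1`. -/
noncomputable def so5RowSum (y : ℝ) (s : ℂ) : ℂ := ∑' m : ℕ, (so5Form (m + 1) y : ℂ) ^ (-s)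

lemma summable_so5Form_cpow_neg {y : ℝ} (hy : 0 < y) {s : ℂ} (hs : 1 / 3 < s.re) :
    Summable fun m : ℕ ↦ (so5Form (m + 1) y : ℂ) ^ (-s) :=
  .of_norm_bounded
    ((summable_nat_add_one_rpow_neg (by push_cast; linarith)).mul_right (y ^ (-((1 : ℕ) * s.re))))
    fun m ↦ norm_so5Form_cpow_neg_le (by positivity) hy (by linarith) (a := 3) (by simp) le_rfl rfl

lemma differentiable_so5Form_cpow_neg {x y : ℝ} (hx : 0 < x) (hy : 0 < y) :
    Differentiable ℂ fun s : ℂ ↦ (so5Form x y : ℂ) ^ (-s) :=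
  differentiable_fun_id.fun_neg.const_cpow (Or.inl (by exact_mod_cast (so5Form_pos hx hy).ne'))

lemma differentiableOn_so5RowSum {y : ℝ} (hy : 0 < y) :
    DifferentiableOn ℂ (so5RowSum y) (Complex.re ⁻¹' Ioi (1 / 3)) := by
  refine differentiableOn_tsum_of_norm_le_rpow (B := fun s ↦ y ^ (-((1 : ℕ) * s.re)))
    (σ := fun s ↦ (3 : ℕ) * s.re) (isOpen_Ioi.preimage Complex.continuous_re) ?_ (by fun_prop) ?_
    (fun m ↦ (differentiable_so5Form_cpow_neg (by positivity) hy).differentiableOn) ?_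
  · exact continuousOn_const.rpow (by fun_prop) fun s _ ↦ Or.inl hy.ne'
  · intro s (hs : 1 / 3 < s.re)
    push_cast
    linarith
  · intro m s (hs : 1 / 3 < s.re)
    rw [mul_comm]
    exact norm_so5Form_cpow_neg_le (by positivity) hy (by linarith) (by simp) le_rfl rfl

/-- The error made when the sum `so5RowSum y s` is replaced by the corresponding integral. -/
noncomputable def so5RowRemainder (y : ℝ) (s : ℂ) : ℂ :=
  so5RowSum y s - (y : ℂ) ^ (1 - 4 * s) * so5AngularIntegral s

lemma differentiableOn_so5RowRemainder {y : ℝ} (hy : 0 < y) :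
    DifferentiableOn ℂ (so5RowRemainder y) (Complex.re ⁻¹' Ioo (1 / 3) 1) := by
  have hpow : Differentiable ℂ fun s : ℂ ↦ (y : ℂ) ^ (1 - 4 * s) :=
    Differentiable.const_cpow (by fun_prop) (Or.inl (by exact_mod_cast hy.ne'))
  exact ((differentiableOn_so5RowSum hy).mono fun s hs ↦ hs.1).sub
    (hpow.differentiableOn.mul differentiableOn_so5AngularIntegral)

section UnitInterval

variable {y σ : ℝ}

lemma intervalIntegrable_rpow_neg_mul (hσ1 : σ < 1) (c : ℝ) :
    IntervalIntegrable (fun x : ℝ ↦ x ^ (-σ) * c) volume 0 1 :=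
  (intervalIntegral.intervalIntegrable_rpow' (by linarith)).mul_const _

lemma so5Form_rpow_neg_le_rpow_neg_mul (hy : 0 < y) (hσ : 0 ≤ σ) {x : ℝ} (hx : 0 < x) :
    so5Form x y ^ (-σ) ≤ x ^ (-σ) * y ^ (-(3 * σ)) := by
  simpa using so5Form_rpow_neg_le hx hy hσ le_rfl (b := 3) (by simp) rfl

lemma intervalIntegrable_so5Form_rpow_neg (hy : 0 < y) (hσ : 0 ≤ σ) (hσ1 : σ < 1) :
    IntervalIntegrable (fun x ↦ so5Form x y ^ (-σ)) volume 0 1 := by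
  refine (intervalIntegrable_rpow_neg_mul hσ1 (y ^ (-(3 * σ)))).mono_fun' ?_ ?_
  · have hform : Measurable fun x ↦ so5Form x y := by
      unfold so5Form
      fun_prop
    exact (hform.pow_const _).aestronglyMeasurable
  · rw [uIoc_of_le zero_le_one]
    refine (ae_restrict_iff' measurableSet_Ioc).2 (Eventually.of_forall fun x hx ↦ ?_)
    dsimp only
    rw [Real.norm_of_nonneg (Real.rpow_nonneg (so5Form_pos hx.1 hy).le _)]
    exact so5Form_rpow_neg_le_rpow_neg_mul hy hσ hx.1

lemma integral_so5Form_rpow_neg_le (hy : 0 < y) (hσ : 0 ≤ σ) (hσ1 : σ < 1) :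
    ∫ x in (0 : ℝ)..1, so5Form x y ^ (-σ) ≤ y ^ (-(3 * σ)) / (1 - σ) := by
  calc ∫ x in (0 : ℝ)..1, so5Form x y ^ (-σ)
      ≤ ∫ x in (0 : ℝ)..1, x ^ (-σ) * y ^ (-(3 * σ)) :=
        intervalIntegral.integral_mono_on_of_le_Ioo zero_le_one
          (intervalIntegrable_so5Form_rpow_neg hy hσ hσ1) (intervalIntegrable_rpow_neg_mul hσ1 _)
          fun x hx ↦ so5Form_rpow_neg_le_rpow_neg_mul hy hσ hx.1
    _ = y ^ (-(3 * σ)) / (1 - σ) := by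
        rw [intervalIntegral.integral_mul_const, integral_rpow (Or.inl (by linarith)),
          Real.one_rpow, Real.zero_rpow (by linarith), sub_zero, neg_add_eq_sub, one_div_mul_eq_div]

end UnitInterval

theorem norm_so5RowRemainder_le {y : ℝ} (hy : 0 < y) {s : ℂ}
    (hs : s ∈ Complex.re ⁻¹' Ioo (1 / 3) 1) :
    ‖so5RowRemainder y s‖ ≤ ‖s‖ / s.re / (1 - s.re) * y ^ (-(3 * s.re)) := by
  have hre : 0 < s.re := by linarith [hs.1]
  calc ‖so5RowRemainder y s‖
      ≤ ∫ x in (0 : ℝ)..1, ‖s‖ / s.re * so5Form x y ^ (-s.re) := by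
        rw [so5RowRemainder, ← integral_so5Form_cpow_neg hy s]
        refine norm_tsum_sub_integral_Ioi_le (f := fun x ↦ (so5Form x y : ℂ) ^ (-s))
          (fun x hx ↦ ?_) (fun x₁ x₂ hx₁ hx ↦ ?_) (integrableOn_so5Form_cpow_neg hy hs)
          ((intervalIntegrable_so5Form_rpow_neg hy hre.le hs.2).const_mul _)
          (summable_so5Form_cpow_neg hy hs.1)
        · have := so5Form_pos hx hy
          positivity
        · rw [← mul_sub]
          exact norm_cpow_neg_sub_cpow_neg_le (so5Form_pos hx₁ hy)
            (so5Form_le_so5Form_left hx₁ hx hy) hre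
    _ ≤ ‖s‖ / s.re * (y ^ (-(3 * s.re)) / (1 - s.re)) := by
        rw [intervalIntegral.integral_const_mul]
        gcongr
        exact integral_so5Form_rpow_neg_le hy hre.le hs.2
    _ = ‖s‖ / s.re / (1 - s.re) * y ^ (-(3 * s.re)) := by ring

/-- The sum over `n ≥ 1` of the errors `so5RowRemainder n s`, which is the part of the double
series that is regular at `s = 1 / 2`. -/
noncomputable def so5Remainder (s : ℂ) : ℂ := ∑' n : ℕ, so5RowRemainder (n + 1) s

lemma summable_so5RowRemainder {s : ℂ} (hs : s ∈ Complex.re ⁻¹' Ioo (1 / 3) 1) :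
    Summable fun n : ℕ ↦ so5RowRemainder (n + 1) s :=
  .of_norm_bounded ((summable_nat_add_one_rpow_neg (by linarith [hs.1])).mul_left _)
    fun _ ↦ norm_so5RowRemainder_le (by positivity) hs

lemma differentiableOn_so5Remainder :
    DifferentiableOn ℂ so5Remainder (Complex.re ⁻¹' Ioo (1 / 3) 1) := by
  refine differentiableOn_tsum_of_norm_le_rpow (B := fun s ↦ ‖s‖ / s.re / (1 - s.re))
    (σ := fun s ↦ 3 * s.re) (isOpen_Ioo.preimage Complex.continuous_re) ?_ (by fun_prop)
    (fun s hs ↦ by linarith [hs.1]) (fun n ↦ differentiableOn_so5RowRemainder (by positivity))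
    fun n s hs ↦ norm_so5RowRemainder_le (by positivity) hs
  refine ContinuousOn.div (ContinuousOn.div (by fun_prop) (by fun_prop) fun s hs ↦ ?_)
    (by fun_prop) fun s hs ↦ (sub_pos.2 hs.2).ne'
  linarith [hs.1]

/-- The Witten zeta function of `so(5)`, given by its double series. The series converges
absolutely for `1 / 2 < s.re`; elsewhere `∑'` may take the value `0`, so that this is not the
meromorphic continuation. The pair `p` stands for `(m - 1, n - 1)`. -/
noncomputable def wittenZetaSO5 (s : ℂ) : ℂ :=
  (6 : ℂ) ^ s * ∑' p : ℕ × ℕ,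
    ((((p.1 + 1) * (p.2 + 1) * ((p.1 + 1) + (p.2 + 1)) *
      ((p.1 + 1) + 2 * (p.2 + 1)) : ℕ) : ℂ)) ^ (-s)

lemma summable_prod_so5Form_cpow_neg {s : ℂ} (hs : 1 / 2 < s.re) :
    Summable fun p : ℕ × ℕ ↦ (so5Form (p.1 + 1) (p.2 + 1) : ℂ) ^ (-s) := by
  have hsum : Summable fun n : ℕ ↦ ((n : ℝ) + 1) ^ (-((2 : ℕ) * s.re)) :=
    summable_nat_add_one_rpow_neg (by push_cast; linarith)
  exact .of_norm_bounded (hsum.mul_of_nonneg hsum (fun _ ↦ by positivity) fun _ ↦ by positivity)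
    fun p ↦ norm_so5Form_cpow_neg_le (by positivity) (by positivity) (by linarith) (by simp)
      (by simp) rfl

lemma wittenZetaSO5_eq_tsum_so5RowSum {s : ℂ} (hs : 1 / 2 < s.re) :
    wittenZetaSO5 s = (6 : ℂ) ^ s * ∑' n : ℕ, so5RowSum (n + 1) s := by
  have hterm (p : ℕ × ℕ) : ((((p.1 + 1) * (p.2 + 1) * ((p.1 + 1) + (p.2 + 1)) *
      ((p.1 + 1) + 2 * (p.2 + 1)) : ℕ) : ℂ)) = (so5Form (p.1 + 1) (p.2 + 1) : ℂ) := by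
    simp [so5Form]
  simp_rw [wittenZetaSO5, hterm]
  rw [← (Equiv.prodComm ℕ ℕ).tsum_eq]
  exact congrArg _ (summable_prod_so5Form_cpow_neg hs).prod_symm.tsum_prod

/-- The meromorphic continuation of the Witten zeta function of `so(5)` to the strip
`1 / 3 < s.re < 1`. -/
noncomputable def so5Continuation (s : ℂ) : ℂ :=
  (6 : ℂ) ^ s * (riemannZeta (4 * s - 1) * so5AngularIntegral s + so5Remainder s)

theorem wittenZetaSO5_eq_so5Continuation {s : ℂ} (hs : s ∈ Complex.re ⁻¹' Ioo (1 / 2) 1) :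
    wittenZetaSO5 s = so5Continuation s := by
  have hs' : s ∈ Complex.re ⁻¹' Ioo (1 / 3) 1 := ⟨by linarith [hs.1], hs.2⟩
  have hre : 1 < (4 * s - 1).re := by
    simp
    linarith [hs.1]
  have hpow (n : ℕ) : ((n + 1 : ℝ) : ℂ) ^ (1 - 4 * s) = 1 / (n + 1 : ℂ) ^ (4 * s - 1) := by
    rw [← neg_sub, Complex.cpow_neg, one_div]
    norm_cast
  have hzeta : HasSum (fun n : ℕ ↦ ((n + 1 : ℝ) : ℂ) ^ (1 - 4 * s)) (riemannZeta (4 * s - 1)) := by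
    simp_rw [hpow, zeta_eq_tsum_one_div_nat_add_one_cpow hre]
    exact_mod_cast ((summable_nat_add_iff 1).2 (Complex.summable_one_div_nat_cpow.2 hre)).hasSum
  have hrow : HasSum (fun n : ℕ ↦ so5RowSum (n + 1) s)
      (riemannZeta (4 * s - 1) * so5AngularIntegral s + so5Remainder s) := by
    have hrem : HasSum (fun n : ℕ ↦ so5RowRemainder (n + 1) s) (so5Remainder s) :=
      (summable_so5RowRemainder hs').hasSum
    simpa only [so5RowRemainder, add_sub_cancel] using
      (hzeta.mul_right (so5AngularIntegral s)).add hrem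
  rw [wittenZetaSO5_eq_tsum_so5RowSum hs.1, hrow.tsum_eq, so5Continuation]

lemma differentiable_six_cpow : Differentiable ℂ fun s : ℂ ↦ (6 : ℂ) ^ s :=
  differentiable_id.const_cpow (Or.inl (by norm_num))

lemma four_mul_sub_one_ne_one {s : ℂ} (hs : s ≠ 1 / 2) : 4 * s - 1 ≠ 1 := fun h ↦
  hs (by linear_combination h / 4)

lemma differentiableOn_so5Continuation :
    DifferentiableOn ℂ so5Continuation (Complex.re ⁻¹' Ioo (1 / 3) 1 \ {1 / 2}) := by
  have hzeta : DifferentiableOn ℂ (fun s ↦ riemannZeta (4 * s - 1))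
      (Complex.re ⁻¹' Ioo (1 / 3) 1 \ {1 / 2}) := fun s hs ↦
    ((differentiableAt_riemannZeta (four_mul_sub_one_ne_one hs.2)).comp s
      (by fun_prop)).differentiableWithinAt
  exact differentiable_six_cpow.differentiableOn.mul
    ((hzeta.mul (differentiableOn_so5AngularIntegral.mono sdiff_subset)).add
      (differentiableOn_so5Remainder.mono sdiff_subset))

lemma tendsto_sub_mul_riemannZeta_four_mul_sub_one :
    Tendsto (fun s : ℂ ↦ (s - 1 / 2) * riemannZeta (4 * s - 1)) (𝓝[≠] (1 / 2)) (𝓝 (1 / 4)) := by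
  have hlim : Tendsto (fun s : ℂ ↦ 4 * s - 1) (𝓝[≠] (1 / 2)) (𝓝[≠] 1) := by
    refine tendsto_nhdsWithin_of_tendsto_nhds_of_eventually_within _
      ((Continuous.tendsto' (by fun_prop) _ _ (by norm_num)).mono_left nhdsWithin_le_nhds) ?_
    filter_upwards [self_mem_nhdsWithin] with s hs
    exact four_mul_sub_one_ne_one hs
  have hres := (riemannZeta_residue_one.comp hlim).const_mul (1 / 4)
  rw [mul_one] at hres
  refine hres.congr fun s ↦ ?_
  simp only [Function.comp_apply]
  ring

lemma six_cpow_mul_so5AngularIntegral_one_half :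
    (6 : ℂ) ^ (1 / 2 : ℂ) * (1 / 4 * so5AngularIntegral (1 / 2)) =
      ((√3 * Real.Gamma (1 / 4) ^ 2 / (8 * √Real.pi) : ℝ) : ℂ) := by
  have hsix : (6 : ℂ) ^ (1 / 2 : ℂ) = ((√2 * √3 : ℝ) : ℂ) := by
    rw [← Real.sqrt_mul zero_le_two, Real.sqrt_eq_rpow, Complex.ofReal_cpow (by norm_num)]
    norm_num
  have hreal : √2 * √3 * (1 / 4 * (Real.Gamma (1 / 4) ^ 2 / (2 * √(2 * Real.pi)))) =
      √3 * Real.Gamma (1 / 4) ^ 2 / (8 * √Real.pi) := by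
    rw [Real.sqrt_mul zero_le_two]
    field_simp
    norm_num
  rw [hsix, so5AngularIntegral_one_half, ← hreal]
  push_cast
  rfl

theorem tendsto_sub_mul_so5Continuation :
    Tendsto (fun s ↦ (s - 1 / 2) * so5Continuation s) (𝓝[≠] (1 / 2))
      (𝓝 ((√3 * Real.Gamma (1 / 4) ^ 2 / (8 * √Real.pi) : ℝ) : ℂ)) := by
  have hstrip : Complex.re ⁻¹' Ioo (1 / 3) 1 ∈ 𝓝 (1 / 2 : ℂ) :=
    (isOpen_Ioo.preimage Complex.continuous_re).mem_nhds (by norm_num)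
  have hlim {f : ℂ → ℂ} (hf : DifferentiableOn ℂ f (Complex.re ⁻¹' Ioo (1 / 3) 1)) :
      Tendsto f (𝓝[≠] (1 / 2)) (𝓝 (f (1 / 2))) :=
    (hf.differentiableAt hstrip).continuousAt.tendsto.mono_left nhdsWithin_le_nhds
  have hsub : Tendsto (fun s : ℂ ↦ s - 1 / 2) (𝓝[≠] (1 / 2)) (𝓝 0) := by
    simpa using hlim (f := fun s ↦ s - 1 / 2) (by fun_prop)
  have hmain := (hlim differentiable_six_cpow.differentiableOn).mul
    ((tendsto_sub_mul_riemannZeta_four_mul_sub_one.mul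
      (hlim differentiableOn_so5AngularIntegral)).add
      (hsub.mul (hlim differentiableOn_so5Remainder)))
  rw [zero_mul, add_zero, six_cpow_mul_so5AngularIntegral_one_half] at hmain
  refine hmain.congr fun s ↦ ?_
  rw [so5Continuation]
  ring

end SO5

theorem stmt7_general {Z : ℂ → ℂ} {U : Set ℂ} (hU : U ∈ 𝓝 (1 / 2 : ℂ))
    (hhol : DifferentiableOn ℂ Z (U \ {1 / 2}))
    (hser : Z =ᶠ[𝓝[{s | 1 / 2 < s.re}] (1 / 2)] wittenZetaSO5) :
    Tendsto (fun s : ℂ ↦ (s - 1 / 2) * Z s) (𝓝[≠] (1 / 2))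
      (𝓝 ((√3 * Real.Gamma (1 / 4) ^ 2 / (8 * √Real.pi) : ℝ) : ℂ)) := by
  have hstrip : Complex.re ⁻¹' Set.Ioo (1 / 3) 1 ∈ 𝓝 (1 / 2 : ℂ) :=
    (isOpen_Ioo.preimage Complex.continuous_re).mem_nhds (by norm_num)
  have hright : Z =ᶠ[𝓝[{s | 1 / 2 < s.re}] (1 / 2)] so5Continuation := by
    filter_upwards [hser, self_mem_nhdsWithin, mem_nhdsWithin_of_mem_nhds hstrip] with s hZ hs hs₁
    exact hZ.trans (wittenZetaSO5_eq_so5Continuation ⟨hs, hs₁.2⟩)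
  have hpunctured : Z =ᶠ[𝓝[≠] (1 / 2)] so5Continuation :=
    eventuallyEq_nhdsNE_of_eventuallyEq_nhdsWithin (inter_mem hU hstrip)
      (hhol.mono fun s hs ↦ ⟨hs.1.1, hs.2⟩)
      (differentiableOn_so5Continuation.mono fun s hs ↦ ⟨hs.1.2, hs.2⟩)
      (isOpen_lt continuous_const Complex.continuous_re)
      (by simp) (by simp) hright
  exact tendsto_sub_mul_so5Continuation.congr' (hpunctured.mono fun s hs ↦ by simp only [hs])

theorem stmt7 (Z : ℂ → ℂ)
    (hhol : DifferentiableOn ℂ Z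
      {s : ℂ | 1 / 4 < s.re ∧ s ≠ 1 / 2 ∧ s ≠ 1 / 3})
    (hser : ∀ s : ℂ, 1 / 2 < s.re →
      Z s = (6 : ℂ) ^ s * ∑' p : ℕ × ℕ,
        ((((p.1 + 1) * (p.2 + 1) * ((p.1 + 1) + (p.2 + 1)) *
          ((p.1 + 1) + 2 * (p.2 + 1)) : ℕ) : ℂ)) ^ (-s)) :
    Tendsto (fun s : ℂ => (s - 1 / 2) * Z s) (𝓝[≠] (1 / 2))
      (𝓝 (((Real.sqrt 3 * Real.Gamma (1 / 4) ^ 2 /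
        (8 * Real.sqrt Real.pi) : ℝ)) : ℂ)) := by
  have hU : {s : ℂ | 1 / 4 < s.re ∧ s ≠ 1 / 3} ∈ 𝓝 (1 / 2 : ℂ) :=
    ((isOpen_lt continuous_const Complex.continuous_re).inter isOpen_ne).mem_nhds (by norm_num)
  exact stmt7_general hU (hhol.mono fun s hs ↦ ⟨hs.1.1, hs.2, hs.1.2⟩)
    (eventually_mem_nhdsWithin.mono hser)
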